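/- arXiv:2304.04323 — 3 statements merged into one kernel-verified Lean document; each statement's English description precedes it below -/
import Mathlib

section
/- If n^(1), n^(2), n^(3) ∈ ℝ² are three pairwise distinct unit vectors, then the three vectors w^(i) := (1, −n^(i)_1, −n^(i)_2)^T ∈ ℝ³, i = 1, 2, 3, are linearly independent. -/
open Matrix

/-! Three distinct points of a sphere are never collinear, hence affinely independent; and points
of a module are affinely independent exactly when their lifts to the affine hyperplane at height
`1` are linearly independent. -/

section Homogenization

variable {ι k : Type*} [Ring k]

theorem affineIndependent_iff_linearIndependent_one_prodMk {V : Type*} [AddCommGroup V]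
    [Module k V] {p : ι → V} :
    AffineIndependent k p ↔ LinearIndependent k (fun i => ((1 : k), p i)) := by
  simp only [affineIndependent_iff, linearIndependent_iff', Prod.smul_mk, smul_eq_mul, mul_one,
    Prod.ext_iff, Prod.fst_sum, Prod.snd_sum, Prod.fst_zero, Prod.snd_zero, and_imp]

theorem affineIndependent_iff_linearIndependent_vecCons_one {d : ℕ} {p : ι → Fin d → k} :
    AffineIndependent k p ↔ LinearIndependent k (fun i => vecCons 1 (p i)) :=
  affineIndependent_iff_linearIndependent_one_prodMk.trans
    ((Fin.consLinearEquiv k fun _ : Fin (d + 1) => k).toLinearMap.linearIndependent_iff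
      (LinearEquiv.ker _)).symm

end Homogenization

theorem w_vectors_linearIndependent_general {d : ℕ} (n : Fin 3 → EuclideanSpace ℝ (Fin d))
    (hn : EuclideanGeometry.Cospherical (Set.range n)) (hinj : Function.Injective n) :
    LinearIndependent ℝ (fun i => vecCons 1 (-(n i).ofLp)) := by
  let negCoords : EuclideanSpace ℝ (Fin d) ≃ₗ[ℝ] (Fin d → ℝ) :=
    (WithLp.linearEquiv 2 ℝ (Fin d → ℝ)).trans (LinearEquiv.neg ℝ)
  have n_indep : AffineIndependent ℝ n := hn.affineIndependent subset_rfl hinj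
  exact affineIndependent_iff_linearIndependent_vecCons_one.mp
    (n_indep.map' negCoords.toLinearMap.toAffineMap negCoords.injective)

/-- If `n⁽¹⁾, n⁽²⁾, n⁽³⁾ ∈ ℝ²` are three pairwise distinct unit vectors, then
the vectors `w⁽ⁱ⁾ = (1, -n⁽ⁱ⁾₁, -n⁽ⁱ⁾₂)ᵀ ∈ ℝ³` are linearly independent. -/
theorem w_vectors_linearIndependent (n : Fin 3 → ℝ × ℝ)
    (hn : ∀ i, (n i).1 ^ 2 + (n i).2 ^ 2 = 1)
    (hdist : ∀ i j, i ≠ j → n i ≠ n j) :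
    LinearIndependent ℝ (fun i : Fin 3 => (![1, -(n i).1, -(n i).2] : Fin 3 → ℝ)) := by
  simpa using w_vectors_linearIndependent_general (fun i => !₂[(n i).1, (n i).2])
    ⟨0, 1, by simp [EuclideanSpace.norm_eq, hn]⟩
    fun i j hij => not_imp_not.mp (hdist i j) (by simpa [Prod.ext_iff] using hij)
end

section
/- Let c > 0, let n^(1), n^(2), n^(3) ∈ ℝ² be three pairwise distinct unit vectors and l_1, l_2, l_3 > 0. Then the matrix M := Σ_{i=1}^{3} l_i A^-_{n^(i)} is negative definite; in particular it is invertible. -/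
open Matrix

/-- First system matrix of the 2D acoustic wave equation. -/
noncomputable def acousticA1 (c : ℝ) : Matrix (Fin 3) (Fin 3) ℝ :=
  !![0, c, 0; c, 0, 0; 0, 0, 0]

/-- Second system matrix of the 2D acoustic wave equation. -/
noncomputable def acousticA2 (c : ℝ) : Matrix (Fin 3) (Fin 3) ℝ :=
  !![0, 0, c; 0, 0, 0; c, 0, 0]

/-- Negative part `A_n⁻ = -(c/2) w wᵀ` with `w = (1, -n₁, -n₂)ᵀ`. -/
noncomputable def fluxNeg (c n₁ n₂ : ℝ) : Matrix (Fin 3) (Fin 3) ℝ :=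
  (-(c / 2)) • vecMulVec ![1, -n₁, -n₂] ![1, -n₁, -n₂]

/-!
The quadratic form of `-M` at `v` is a positively weighted sum of the squares of the values of the
affine functional `p ↦ v₀ - p₁ v₁ - p₂ v₂` at the normals. If it vanishes, this functional is zero
at all the normals, hence everywhere as soon as they affinely span the plane, and so `v = 0`. Three
distinct points of a circle are not collinear, so they do span the plane.
-/

section WeightedGram

variable {ι m n R : Type*} [Fintype ι]

theorem sum_smul_vecMulVec_eq_transpose_mul_diagonal_mul [CommSemiring R] [DecidableEq ι]
    (a : ι → R) (u : ι → m → R) (v : ι → n → R) :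
    ∑ i, a i • vecMulVec (u i) (v i) = (of u)ᵀ * diagonal a * of v := by
  ext j k
  rw [Matrix.sum_apply, mul_apply]
  refine Finset.sum_congr rfl fun i _ => ?_
  simp only [Matrix.smul_apply, vecMulVec_apply, smul_eq_mul, mul_diagonal, transpose_apply,
    of_apply]
  ring

theorem posDef_sum_smul_vecMulVec_star_self [Fintype n] [CommRing R] [PartialOrder R]
    [StarRing R] [StarOrderedRing R] [NoZeroDivisors R] {a : ι → R} (ha : ∀ i, 0 < a i)
    {w : ι → n → R} (hw : Function.Injective (of w).mulVec) :
    (∑ i, a i • vecMulVec (star (w i)) (w i)).PosDef := by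
  classical
  rw [sum_smul_vecMulVec_eq_transpose_mul_diagonal_mul]
  exact (PosDef.diagonal ha).conjTranspose_mul_mul_same hw

end WeightedGram

/-- The vector `w = (1, -p₁, -p₂)` attached to a normal `p`. It spans the range of `A_p⁻` and, when
`p` is a unit vector, is an eigenvector of `A_p` for the eigenvalue `-c`. -/
def fluxVec {R : Type*} [Ring R] (p : R × R) : Fin 3 → R :=
  ![1, -p.1, -p.2]

theorem fluxVec_dotProduct {R : Type*} [CommRing R] (p : R × R) (v : Fin 3 → R) :
    fluxVec p ⬝ᵥ v = v 0 - (v 1 * p.1 + v 2 * p.2) := by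
  simp only [fluxVec, dotProduct, Fin.sum_univ_three, cons_val]
  ring

theorem mulVec_fluxVec_injective {ι R : Type*} [CommRing R] {n : ι → R × R}
    (hn : affineSpan R (Set.range n) = ⊤) :
    Function.Injective (of fun i => fluxVec (n i)).mulVec := by
  refine (injective_iff_map_eq_zero (mulVecLin _)).mpr fun v hv => ?_
  let f : R × R →ᵃ[R] R :=
    AffineMap.const R _ (v 0) - (v 1 • LinearMap.fst R R R + v 2 • LinearMap.snd R R R).toAffineMap
  have f_eq_zero : f = 0 := AffineMap.ext_on hn <| Set.forall_mem_range.mpr fun i =>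
    (fluxVec_dotProduct (n i) v).symm.trans (congrFun hv i)
  have affine_form_eq_zero (x y : R) : v 0 - (v 1 * x + v 2 * y) = 0 :=
    DFunLike.congr_fun f_eq_zero (x, y)
  have v_zero : v 0 = 0 := by simpa using affine_form_eq_zero 0 0
  have v_one : v 1 = 0 := by simpa [v_zero] using affine_form_eq_zero 1 0
  have v_two : v 2 = 0 := by simpa [v_zero] using affine_form_eq_zero 0 1
  ext i
  fin_cases i <;> assumption

theorem affineIndependent_of_sq_add_sq_eq {p : Fin 3 → ℝ × ℝ} {r : ℝ}
    (hp : ∀ i, (p i).1 ^ 2 + (p i).2 ^ 2 = r) (hinj : Function.Injective p) :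
    AffineIndependent ℝ p := by
  -- `ℝ × ℝ` carries the sup norm, so the circle is a metric sphere only in `WithLp 2 (ℝ × ℝ)`.
  let e := (WithLp.linearEquiv 2 ℝ (ℝ × ℝ)).symm
  have cospherical : EuclideanGeometry.Cospherical (Set.range (e ∘ p)) := by
    refine ⟨0, √r, Set.forall_mem_range.mpr fun i => ?_⟩
    simp [e, WithLp.prod_norm_eq_of_L2, hp i]
  exact .of_comp e.toLinearMap.toAffineMap <|
    cospherical.affineIndependent subset_rfl (e.injective.comp hinj)

theorem affineSpan_eq_top_of_sq_add_sq_eq {p : Fin 3 → ℝ × ℝ} {r : ℝ}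
    (hp : ∀ i, (p i).1 ^ 2 + (p i).2 ^ 2 = r) (hinj : Function.Injective p) :
    affineSpan ℝ (Set.range p) = ⊤ :=
  (affineIndependent_of_sq_add_sq_eq hp hinj).affineSpan_eq_top_iff_card_eq_finrank_add_one.mpr
    (by simp)

theorem neg_sum_smul_fluxNeg_eq {ι : Type*} [Fintype ι] (c : ℝ) (n : ι → ℝ × ℝ) (l : ι → ℝ) :
    -(∑ i, l i • fluxNeg c (n i).1 (n i).2) =
      ∑ i, (l i * (c / 2)) • vecMulVec (fluxVec (n i)) (fluxVec (n i)) := by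
  simp only [fluxNeg, fluxVec, neg_smul, smul_neg, smul_smul, Finset.sum_neg_distrib, neg_neg]

theorem sum_fluxNeg_negDef_general {ι : Type*} [Fintype ι] {c : ℝ} (hc : 0 < c)
    {n : ι → ℝ × ℝ} (hn : affineSpan ℝ (Set.range n) = ⊤) {l : ι → ℝ} (hl : ∀ i, 0 < l i) :
    (-(∑ i, l i • fluxNeg c (n i).1 (n i).2)).PosDef ∧
      IsUnit (∑ i, l i • fluxNeg c (n i).1 (n i).2) := by
  have posDef : (-(∑ i, l i • fluxNeg c (n i).1 (n i).2)).PosDef := by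
    rw [neg_sum_smul_fluxNeg_eq]
    exact posDef_sum_smul_vecMulVec_star_self (fun i => mul_pos (hl i) (half_pos hc))
      (mulVec_fluxVec_injective hn)
  exact ⟨posDef, (IsUnit.neg_iff _).mp posDef.isUnit⟩

/-- For `c > 0`, three pairwise distinct unit normals `n⁽ⁱ⁾` and positive face
lengths `lᵢ`, the matrix `M = ∑ᵢ lᵢ A⁻_{n⁽ⁱ⁾}` is negative definite; in
particular it is invertible. -/
theorem sum_fluxNeg_negDef (c : ℝ) (hc : 0 < c)
    (n : Fin 3 → ℝ × ℝ) (l : Fin 3 → ℝ)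
    (hn : ∀ i, (n i).1 ^ 2 + (n i).2 ^ 2 = 1)
    (hdist : ∀ i j, i ≠ j → n i ≠ n j)
    (hl : ∀ i, 0 < l i) :
    (-(∑ i, l i • fluxNeg c (n i).1 (n i).2)).PosDef ∧
      IsUnit (∑ i, l i • fluxNeg c (n i).1 (n i).2) :=
  sum_fluxNeg_negDef_general hc
    (affineSpan_eq_top_of_sq_add_sq_eq hn fun i j => not_imp_not.mp (hdist i j)) hl
end

section
/- Let c > 0, let n^(1), n^(2), n^(3) ∈ ℝ² be three pairwise distinct unit vectors and l_1, l_2, l_3 > 0 with l_1 n^(1) + l_2 n^(2) + l_3 n^(3) = 0, and set M := Σ_{j=1}^{3} l_j A^-_{n^(j)}. Then for each i ∈ {1,2,3}, the matrix ω_i := l_i A^-_{n^(i)} M^{-1} is the unique 3×3 real matrix satisfying the flux distribution condition Σ_{j=1}^{3} l_j · ω_i A^+_{n^(j)} = − l_i A^-_{n^(i)}. -/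
open Matrix

/-- Positive part `A_n⁺ = (c/2) v vᵀ` with `v = (1, n₁, n₂)ᵀ`. -/
noncomputable def fluxPos (c n₁ n₂ : ℝ) : Matrix (Fin 3) (Fin 3) ℝ :=
  (c / 2) • vecMulVec ![1, n₁, n₂] ![1, n₁, n₂]

/-!
Since `A⁺ + A⁻ = n₁ A₁ + n₂ A₂` is linear in `n`, closedness of the cell gives `∑ⱼ lⱼ A⁺ = -M`, so
the flux distribution condition reads `ω M = lᵢ A⁻` and everything rests on the invertibility of
`M`. Up to the factor `-c/2`, the quadratic form of `M` is `∑ⱼ lⱼ (wⱼ ⬝ x)²` with `wⱼ = (1, -nⱼ)`.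
It vanishes only if the affine function `p ↦ x₀ - x₁ p₁ - x₂ p₂` vanishes at all normals; if these
affinely span the plane, as three distinct points of a circle do, then `x = 0`, so `M` is definite.
-/

theorem dotProduct_sum_smul_vecMulVec_self_mulVec {R ι m : Type*} [CommSemiring R] [Fintype ι]
    [Fintype m] (l : ι → R) (w : ι → m → R) (x : m → R) :
    x ⬝ᵥ (∑ j, l j • vecMulVec (w j) (w j)) *ᵥ x = ∑ j, l j * (w j ⬝ᵥ x) ^ 2 := by
  simp only [sum_mulVec, smul_mulVec, vecMulVec_mulVec, op_smul_eq_smul, dotProduct_comm x,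
    sum_dotProduct, smul_dotProduct, smul_eq_mul, sq]

theorem posDef_sum_smul_vecMulVec_self {ι m : Type*} [Fintype ι] [Fintype m] {l : ι → ℝ}
    {w : ι → m → ℝ} (hl : ∀ j, 0 < l j) (hw : ∀ x, (∀ j, w j ⬝ᵥ x = 0) → x = 0) :
    (∑ j, l j • vecMulVec (w j) (w j)).PosDef := by
  have hermitian : (∑ j, l j • vecMulVec (w j) (w j)).IsHermitian := by
    simp only [IsHermitian, conjTranspose_sum, conjTranspose_smul, conjTranspose_vecMulVec,
      star_trivial]
  refine .of_dotProduct_mulVec_pos hermitian fun x hx ↦ ?_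
  obtain ⟨j, hj⟩ : ∃ j, w j ⬝ᵥ x ≠ 0 := not_forall.mp (mt (hw x) hx)
  rw [star_trivial, dotProduct_sum_smul_vecMulVec_self_mulVec]
  refine Finset.sum_pos' (fun k _ ↦ mul_nonneg (hl k).le (sq_nonneg _)) ⟨j, Finset.mem_univ j, ?_⟩
  exact mul_pos (hl j) (sq_pos_of_ne_zero hj)

theorem mul_eq_iff_eq_mul_inv {R m n : Type*} [CommRing R] [Fintype n] [DecidableEq n]
    {M : Matrix n n R} (hM : IsUnit M) {X B : Matrix m n R} : X * M = B ↔ X = B * M⁻¹ := by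
  have := hM.invertible
  rw [eq_comm, ← mul_inv_eq_iff_eq_mul_of_invertible, eq_comm]

theorem affineSpan_range_eq_top_of_sq_add_sq_eq_one {n : Fin 3 → ℝ × ℝ}
    (hn : ∀ i, (n i).1 ^ 2 + (n i).2 ^ 2 = 1) (hinj : Function.Injective n) :
    affineSpan ℝ (Set.range n) = ⊤ := by
  -- `ℝ × ℝ` carries the sup norm, so the circle is viewed in `WithLp 2 (ℝ × ℝ)`.
  let e := (WithLp.linearEquiv 2 ℝ (ℝ × ℝ)).symm.toAffineEquiv
  have cospherical : EuclideanGeometry.Cospherical (Set.range (e ∘ n)) := by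
    refine ⟨0, 1, Set.forall_mem_range.mpr fun i ↦ ?_⟩
    rw [dist_zero_right, ← sq_eq_sq₀ (norm_nonneg _) zero_le_one, one_pow,
      WithLp.prod_norm_sq_eq_of_L2, Real.norm_eq_abs, Real.norm_eq_abs, sq_abs, sq_abs]
    exact hn i
  have independent : AffineIndependent ℝ n :=
    e.affineIndependent_iff.mp (cospherical.affineIndependent subset_rfl (e.injective.comp hinj))
  exact independent.affineSpan_eq_top_iff_card_eq_finrank_add_one.mpr (by simp)

theorem eq_zero_of_forall_dotProduct_one_neg_eq_zero {R ι : Type*} [CommRing R] {n : ι → R × R}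
    (hspan : affineSpan R (Set.range n) = ⊤) {x : Fin 3 → R}
    (hx : ∀ j, ![1, -(n j).1, -(n j).2] ⬝ᵥ x = 0) : x = 0 := by
  let f : R × R →ᵃ[R] R :=
    AffineMap.const R (R × R) (x 0) -
      (x 1 • LinearMap.fst R R R + x 2 • LinearMap.snd R R R).toAffineMap
  have f_apply (p : R × R) : f p = x 0 - (x 1 * p.1 + x 2 * p.2) := rfl
  have f_eq_zero : f = 0 := by
    refine AffineMap.ext_on hspan (Set.forall_mem_range.mpr fun j ↦ ?_)
    have hxj := hx j
    simp only [dotProduct, Fin.sum_univ_three, cons_val] at hxj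
    rw [f_apply, AffineMap.coe_zero, Pi.zero_apply]
    linear_combination hxj
  have f_vanishes (p : R × R) : x 0 - (x 1 * p.1 + x 2 * p.2) = 0 := by
    rw [← f_apply, f_eq_zero, AffineMap.coe_zero, Pi.zero_apply]
  have hx₀ : x 0 = 0 := by simpa using f_vanishes (0, 0)
  have hx₁ : x 1 = 0 := by simpa [hx₀] using f_vanishes (1, 0)
  have hx₂ : x 2 = 0 := by simpa [hx₀] using f_vanishes (0, 1)
  ext k
  fin_cases k
  exacts [hx₀, hx₁, hx₂]

theorem fluxPos_add_fluxNeg (c n₁ n₂ : ℝ) :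
    fluxPos c n₁ n₂ + fluxNeg c n₁ n₂ = n₁ • acousticA1 c + n₂ • acousticA2 c := by
  ext a b
  fin_cases a <;> fin_cases b <;>
    simp [fluxPos, fluxNeg, acousticA1, acousticA2] <;> ring

section Cell

variable {ι : Type*} [Fintype ι] {c : ℝ} {n : ι → ℝ × ℝ} {l : ι → ℝ}

theorem sum_smul_fluxPos_eq_neg_sum_smul_fluxNeg (hclosed : ∑ j, l j • n j = 0) :
    ∑ j, l j • fluxPos c (n j).1 (n j).2 = -∑ j, l j • fluxNeg c (n j).1 (n j).2 := by
  have hfst : ∑ j, l j * (n j).1 = 0 := by simpa [Prod.fst_sum] using congrArg Prod.fst hclosed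
  have hsnd : ∑ j, l j * (n j).2 = 0 := by simpa [Prod.snd_sum] using congrArg Prod.snd hclosed
  rw [eq_neg_iff_add_eq_zero, ← Finset.sum_add_distrib]
  simp only [← smul_add, fluxPos_add_fluxNeg]
  simp only [smul_add, smul_smul, Finset.sum_add_distrib, ← Finset.sum_smul, hfst, hsnd, zero_smul,
    add_zero]

theorem isUnit_sum_smul_fluxNeg (hc : c ≠ 0) (hl : ∀ j, 0 < l j)
    (hspan : affineSpan ℝ (Set.range n) = ⊤) :
    IsUnit (∑ j, l j • fluxNeg c (n j).1 (n j).2) := by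
  have posDef := posDef_sum_smul_vecMulVec_self hl
    fun _ ↦ eq_zero_of_forall_dotProduct_one_neg_eq_zero hspan
  simp only [fluxNeg, smul_comm (l _), ← Finset.smul_sum]
  exact posDef.isUnit.smul (Units.mk0 (-(c / 2)) (by simpa using hc))

theorem weighting_matrix_unique_general (hc : c ≠ 0) (hl : ∀ j, 0 < l j)
    (hspan : affineSpan ℝ (Set.range n) = ⊤) (hclosed : ∑ j, l j • n j = 0) (i : ι)
    (ω : Matrix (Fin 3) (Fin 3) ℝ) :
    ∑ j, l j • (ω * fluxPos c (n j).1 (n j).2) = -(l i • fluxNeg c (n i).1 (n i).2) ↔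
      ω = (l i • fluxNeg c (n i).1 (n i).2) * (∑ j, l j • fluxNeg c (n j).1 (n j).2)⁻¹ := by
  simp only [← Matrix.mul_smul, ← Matrix.mul_sum]
  rw [sum_smul_fluxPos_eq_neg_sum_smul_fluxNeg hclosed, Matrix.mul_neg, neg_inj,
    mul_eq_iff_eq_mul_inv (isUnit_sum_smul_fluxNeg hc hl hspan)]

end Cell

/-- For three pairwise distinct unit normals of a closed cell, the weighting
matrix `ωᵢ = lᵢ A⁻_{n⁽ⁱ⁾} M⁻¹` with `M = ∑ⱼ lⱼ A⁻_{n⁽ʲ⁾}` is the unique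
matrix satisfying the flux distribution condition
`∑ⱼ lⱼ ωᵢ A⁺_{n⁽ʲ⁾} = -lᵢ A⁻_{n⁽ⁱ⁾}`. -/
theorem weighting_matrix_unique (c : ℝ) (hc : 0 < c)
    (n : Fin 3 → ℝ × ℝ) (l : Fin 3 → ℝ)
    (hn : ∀ i, (n i).1 ^ 2 + (n i).2 ^ 2 = 1)
    (hdist : ∀ i j, i ≠ j → n i ≠ n j)
    (hl : ∀ i, 0 < l i)
    (hclosed : ∑ i, l i • n i = 0) (i : Fin 3) :
    (fun ω : Matrix (Fin 3) (Fin 3) ℝ =>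
        (∑ j, l j • (ω * fluxPos c (n j).1 (n j).2)) =
          -(l i • fluxNeg c (n i).1 (n i).2))
      ((l i • fluxNeg c (n i).1 (n i).2) *
        (∑ j, l j • fluxNeg c (n j).1 (n j).2)⁻¹) ∧
    ∀ ω : Matrix (Fin 3) (Fin 3) ℝ,
      (∑ j, l j • (ω * fluxPos c (n j).1 (n j).2)) =
          -(l i • fluxNeg c (n i).1 (n i).2) →
        ω = (l i • fluxNeg c (n i).1 (n i).2) *
          (∑ j, l j • fluxNeg c (n j).1 (n j).2)⁻¹ := by
  have hspan := affineSpan_range_eq_top_of_sq_add_sq_eq_one hn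
    fun i j ↦ not_imp_not.mp (hdist i j)
  have condition_iff := weighting_matrix_unique_general hc.ne' hl hspan hclosed i
  exact ⟨(condition_iff _).mpr rfl, fun ω ↦ (condition_iff ω).mp⟩
end
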